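/- Let A and B be nondegenerate SVNR-sets of dimension p on X = {x_1, …, x_n}, and let w_1, …, w_n be weights with w_j ≥ 0 and Σ_{j=1}^n w_j = 1. Then the weighted Jaccard similarity measure satisfies: (1) 0 ≤ W(A,B)_J ≤ 1; (2) W(A,B)_J = W(B,A)_J; (3) if t_A^i(x_j) = t_B^i(x_j), i_A^i(x_j) = i_B^i(x_j) and f_A^i(x_j) = f_B^i(x_j) for every j ∈ {1,…,n} and i ∈ {1,…,p}, then W(A,B)_J = 1. -/

import Mathlib

open Finset

noncomputable def weightedJaccardSVNR (n p : ℕ) (w : Fin n → ℝ)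
    (tA iA fA tB iB fB : Fin p → Fin n → ℝ) : ℝ :=
  ∑ j : Fin n, w j * ((1 / (p : ℝ)) * ∑ i : Fin p,
    (tA i j * tB i j + iA i j * iB i j + fA i j * fB i j) /
      ((tA i j ^ 2 + iA i j ^ 2 + fA i j ^ 2) + (tB i j ^ 2 + iB i j ^ 2 + fB i j ^ 2)
        - (tA i j * tB i j + iA i j * iB i j + fA i j * fB i j)))

theorem jaccard_ratio_le_one (a b c x y z : ℝ) :
    (a * x + b * y + c * z) /
      ((a ^ 2 + b ^ 2 + c ^ 2) + (x ^ 2 + y ^ 2 + z ^ 2) - (a * x + b * y + c * z)) ≤ 1 := by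
  apply div_le_one_of_le₀ <;>
  nlinarith [sq_nonneg (a - x), sq_nonneg (b - y), sq_nonneg (c - z),
    sq_nonneg (a + x), sq_nonneg (b + y), sq_nonneg (c + z)]

theorem jaccard_ratio_nonneg {a b c x y z : ℝ} (ha : 0 ≤ a) (hb : 0 ≤ b) (hc : 0 ≤ c)
    (hx : 0 ≤ x) (hy : 0 ≤ y) (hz : 0 ≤ z) :
    0 ≤ (a * x + b * y + c * z) /
      ((a ^ 2 + b ^ 2 + c ^ 2) + (x ^ 2 + y ^ 2 + z ^ 2) - (a * x + b * y + c * z)) := by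
  apply div_nonneg
  · positivity
  · nlinarith [sq_nonneg (a - x), sq_nonneg (b - y), sq_nonneg (c - z),
      sq_nonneg (a + x), sq_nonneg (b + y), sq_nonneg (c + z)]

theorem jaccard_ratio_self {a b c : ℝ} (h : ¬(a = 0 ∧ b = 0 ∧ c = 0)) :
    (a * a + b * b + c * c) /
      ((a ^ 2 + b ^ 2 + c ^ 2) + (a ^ 2 + b ^ 2 + c ^ 2) - (a * a + b * b + c * c)) = 1 := by
  have hne : a * a + b * b + c * c ≠ 0 := fun h0 => h
    ⟨mul_self_eq_zero.mp (by nlinarith [mul_self_nonneg a, mul_self_nonneg b, mul_self_nonneg c]),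
     mul_self_eq_zero.mp (by nlinarith [mul_self_nonneg a, mul_self_nonneg b, mul_self_nonneg c]),
     mul_self_eq_zero.mp (by nlinarith [mul_self_nonneg a, mul_self_nonneg b, mul_self_nonneg c])⟩
  rw [div_eq_one_iff_eq] <;> ring_nf at hne ⊢
  exact hne

theorem stmt_3
    (n p : ℕ) (hn : 1 ≤ n) (hp : 1 ≤ p)
    (tA iA fA tB iB fB : Fin p → Fin n → ℝ)
    (htA : ∀ i j, tA i j ∈ Set.Icc (0 : ℝ) 1)
    (hiA : ∀ i j, iA i j ∈ Set.Icc (0 : ℝ) 1)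
    (hfA : ∀ i j, fA i j ∈ Set.Icc (0 : ℝ) 1)
    (htB : ∀ i j, tB i j ∈ Set.Icc (0 : ℝ) 1)
    (hiB : ∀ i j, iB i j ∈ Set.Icc (0 : ℝ) 1)
    (hfB : ∀ i j, fB i j ∈ Set.Icc (0 : ℝ) 1)
    (hnd : ∀ i j, ¬((tA i j = 0 ∧ iA i j = 0 ∧ fA i j = 0) ∧
                      (tB i j = 0 ∧ iB i j = 0 ∧ fB i j = 0)))
    (w : Fin n → ℝ) (hw : ∀ j, 0 ≤ w j) (hw1 : ∑ j, w j = 1) :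
    (0 ≤ weightedJaccardSVNR n p w tA iA fA tB iB fB ∧ weightedJaccardSVNR n p w tA iA fA tB iB fB ≤ 1) ∧
    weightedJaccardSVNR n p w tA iA fA tB iB fB = weightedJaccardSVNR n p w tB iB fB tA iA fA ∧
    ((∀ i j, tA i j = tB i j ∧ iA i j = iB i j ∧ fA i j = fB i j) →
      weightedJaccardSVNR n p w tA iA fA tB iB fB = 1) := by
  have hp0 : (0 : ℝ) < p := by exact_mod_cast hp
  refine ⟨⟨?_, ?_⟩, ?_, fun h => ?_⟩
  · exact sum_nonneg fun j _ => mul_nonneg (hw j) <| mul_nonneg (by positivity) <|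
      sum_nonneg fun i _ => jaccard_ratio_nonneg (htA i j).1 (hiA i j).1 (hfA i j).1
        (htB i j).1 (hiB i j).1 (hfB i j).1
  · rw [← hw1]
    refine sum_le_sum fun j _ => mul_le_of_le_one_right (hw j) ?_
    rw [one_div, inv_mul_le_iff₀ hp0, mul_one]
    refine (sum_le_sum fun i _ => jaccard_ratio_le_one _ _ _ _ _ _).trans ?_
    simp
  · refine sum_congr rfl fun j _ => ?_
    congr 2
    refine sum_congr rfl fun i _ => ?_
    congr 1 <;> ring
  · obtain rfl : tA = tB := funext₂ fun i j => (h i j).1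
    obtain rfl : iA = iB := funext₂ fun i j => (h i j).2.1
    obtain rfl : fA = fB := funext₂ fun i j => (h i j).2.2
    rw [← hw1]
    refine sum_congr rfl fun j _ => ?_
    rw [sum_congr rfl fun i _ => jaccard_ratio_self fun h0 => hnd i j ⟨h0, h0⟩]
    simp [hp0.ne']
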